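/- Let P ⊆ ℝ^d be a d-dimensional simplicial reflexive polytope, F a facet of P, v ∈ 𝒱(F), and let F' = N(F,v) be the neighboring facet. Then ⟨u_{F'}, v⟩ ≤ 0, and for every point x ∈ ℝ^d one has ⟨u_{F'}, x⟩ = ⟨u_F, x⟩ + (⟨u_{F'}, v⟩ − 1)·⟨u_F^v, x⟩. -/

import Mathlib

noncomputable section

/-- The standard inner product on `ℝ^d`. -/
def dotp {d : ℕ} (x y : Fin d → ℝ) : ℝ := ∑ i, x i * y i

/-- `x` is a point of the lattice `ℤ^d`. -/
def IsLP {d : ℕ} (x : Fin d → ℝ) : Prop := ∀ i, ∃ n : ℤ, x i = (n : ℝ)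

/-- A lattice polytope: convex hull of finitely many lattice points. -/
def IsLatticePolytope {d : ℕ} (P : Set (Fin d → ℝ)) : Prop :=
  ∃ V : Finset (Fin d → ℝ), (∀ v ∈ V, IsLP v) ∧ P = convexHull ℝ (V : Set (Fin d → ℝ))

/-- The dual polytope `P* = {x | ⟨x,y⟩ ≤ 1 ∀ y ∈ P}`. -/
def dualPolytope {d : ℕ} (P : Set (Fin d → ℝ)) : Set (Fin d → ℝ) :=
  {x | ∀ y ∈ P, dotp x y ≤ 1}

/-- `P` is a reflexive polytope: a (`d`-dimensional) lattice polytope with `0` in its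
interior whose dual is again a lattice polytope. -/
def IsReflexive {d : ℕ} (P : Set (Fin d → ℝ)) : Prop :=
  IsLatticePolytope P ∧ (0 : Fin d → ℝ) ∈ interior P ∧ IsLatticePolytope (dualPolytope P)

/-- `F` is a facet of `P` with (uniquely determined) outer normal `u`, normalized by
`⟨u, F⟩ = 1` (possible since `0` is in the interior of `P`). -/
def IsFacetNormal {d : ℕ} (P F : Set (Fin d → ℝ)) (u : Fin d → ℝ) : Prop :=
  F.Nonempty ∧ (∀ y ∈ P, dotp u y ≤ 1) ∧ F = {y ∈ P | dotp u y = 1} ∧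
    Module.finrank ℝ (vectorSpan ℝ F) = d - 1

/-- `F` is a facet of `P`. -/
def IsFacet {d : ℕ} (P F : Set (Fin d → ℝ)) : Prop := ∃ u, IsFacetNormal P F u

/-- `P` is simplicial: every facet has exactly `d` vertices. -/
def IsSimplicial {d : ℕ} (P : Set (Fin d → ℝ)) : Prop :=
  ∀ F, IsFacet P F → (Set.extremePoints ℝ F).ncard = d

/-!
The functionals `u'` and `u + (⟨u', v⟩ - 1) u_F^v` agree on every vertex of `F`. The vertices of a
facet span `ℝ^d`, because the facet has dimension `d - 1` and lies in the affine hyperplane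
`⟨u, ·⟩ = 1`, which avoids the origin; hence the two functionals are equal. In particular
`⟨u', v⟩ = 1` would force `u' = u`, so `v` is not in `F'` and `⟨u', v⟩ < 1`. By reflexivity `u'`,
being a vertex of the dual polytope, is a lattice vector, and so is the vertex `v`; thus `⟨u', v⟩`
is an integer less than `1`.
-/

theorem vectorSpan_lt_span_of_forall_eq {R M N : Type*} [Ring R] [AddCommGroup M] [Module R M]
    [AddCommGroup N] [Module R N] {S : Set M} {f : M →ₗ[R] N} {c : N} (hS : S.Nonempty)
    (hc : c ≠ 0) (hf : ∀ x ∈ S, f x = c) : vectorSpan R S < Submodule.span R S := by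
  have hle_span : vectorSpan R S ≤ Submodule.span R S := by
    rw [vectorSpan_def, Submodule.span_le]
    rintro _ ⟨a, ha, b, hb, rfl⟩
    exact sub_mem (Submodule.subset_span ha) (Submodule.subset_span hb)
  have hle_ker : vectorSpan R S ≤ LinearMap.ker f := by
    rw [vectorSpan_def, Submodule.span_le]
    rintro _ ⟨a, ha, b, hb, rfl⟩
    exact LinearMap.sub_mem_ker_iff.2 ((hf a ha).trans (hf b hb).symm)
  obtain ⟨x, hx⟩ := hS
  refine lt_of_le_of_ne hle_span fun heq => hc ?_
  have hx_ker : x ∈ LinearMap.ker f := hle_ker (heq ▸ Submodule.subset_span hx)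
  rw [← hf x hx, hx_ker]

theorem span_extremePoints {E : Type*} [AddCommGroup E] [Module ℝ E] [TopologicalSpace E]
    [T2Space E] [IsTopologicalAddGroup E] [ContinuousSMul ℝ E] [LocallyConvexSpace ℝ E]
    [FiniteDimensional ℝ E] {S : Set E} (hScomp : IsCompact S) (hSconv : Convex ℝ S) :
    Submodule.span ℝ (S.extremePoints ℝ) = Submodule.span ℝ S := by
  refine le_antisymm (Submodule.span_mono extremePoints_subset) (Submodule.span_le.2 ?_)
  calc S = closure (convexHull ℝ (S.extremePoints ℝ)) :=
        (closure_convexHull_extremePoints hScomp hSconv).symm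
    _ ⊆ Submodule.span ℝ (S.extremePoints ℝ) :=
        closure_minimal (convexHull_min Submodule.subset_span (Submodule.convex _))
          (Submodule.closed_of_finiteDimensional _)

theorem isExposed_sep_eq {𝕜 E : Type*} [TopologicalSpace 𝕜] [Semiring 𝕜] [PartialOrder 𝕜]
    [AddCommMonoid E] [TopologicalSpace E] [Module 𝕜 E] {A : Set E} {l : StrongDual 𝕜 E} {c : 𝕜}
    (hl : ∀ x ∈ A, l x ≤ c) : IsExposed 𝕜 A {x ∈ A | l x = c} := by
  rintro ⟨z, hzA, hz⟩
  refine ⟨l, Set.ext fun x => and_congr_right fun hx => ⟨fun h y hy => ?_, fun h => ?_⟩⟩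
  · exact (hl y hy).trans h.ge
  · exact (hl x hx).antisymm (hz.symm.trans_le (h z hzA))

section Pairing

variable {d : ℕ} {x y : Fin d → ℝ}

theorem dotp_comm (x y : Fin d → ℝ) : dotp x y = dotp y x :=
  dotProduct_comm x y

theorem dotp_add_smul_left (x y z : Fin d → ℝ) (c : ℝ) :
    dotp (x + c • y) z = dotp x z + c * dotp y z := by
  change (x + c • y) ⬝ᵥ z = x ⬝ᵥ z + c * (y ⬝ᵥ z)
  rw [add_dotProduct, smul_dotProduct, smul_eq_mul]

theorem eq_of_forall_dotp_eq {S : Set (Fin d → ℝ)} (hS : Submodule.span ℝ S = ⊤)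
    (h : ∀ z ∈ S, dotp x z = dotp y z) : x = y :=
  (dotProductEquiv ℝ (Fin d)).injective (LinearMap.ext_on hS h)

theorem isExposed_sep_dotp_eq {A : Set (Fin d → ℝ)} {c : ℝ} (hx : ∀ y ∈ A, dotp x y ≤ c) :
    IsExposed ℝ A {y ∈ A | dotp x y = c} :=
  isExposed_sep_eq (l := LinearMap.toContinuousLinearMap (dotProductEquiv ℝ (Fin d) x)) hx

theorem IsLP.exists_int_dotp_eq (hx : IsLP x) (hy : IsLP y) : ∃ n : ℤ, dotp x y = n := by
  choose a ha using hx
  choose b hb using hy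
  exact ⟨∑ i, a i * b i, by simp [dotp, ha, hb]⟩

end Pairing

namespace IsLatticePolytope

variable {d : ℕ} {P : Set (Fin d → ℝ)}

theorem isCompact (hP : IsLatticePolytope P) : IsCompact P := by
  obtain ⟨V, -, rfl⟩ := hP
  exact V.finite_toSet.isCompact_convexHull ℝ

theorem convex (hP : IsLatticePolytope P) : Convex ℝ P := by
  obtain ⟨V, -, rfl⟩ := hP
  exact convex_convexHull ℝ _

theorem isLP_of_mem_extremePoints (hP : IsLatticePolytope P) {x : Fin d → ℝ}
    (hx : x ∈ P.extremePoints ℝ) : IsLP x := by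
  obtain ⟨V, hV, rfl⟩ := hP
  exact hV x (extremePoints_convexHull_subset hx)

end IsLatticePolytope

namespace IsFacetNormal

variable {d : ℕ} {P F : Set (Fin d → ℝ)} {u v w x : Fin d → ℝ}

theorem mem_iff (hF : IsFacetNormal P F u) : x ∈ F ↔ x ∈ P ∧ dotp u x = 1 := by
  rw [hF.2.2.1]
  rfl

theorem isExposed (hF : IsFacetNormal P F u) : IsExposed ℝ P F :=
  hF.2.2.1 ▸ isExposed_sep_dotp_eq hF.2.1

theorem span_eq_top (hF : IsFacetNormal P F u) : Submodule.span ℝ F = ⊤ := by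
  have hlt : vectorSpan ℝ F < Submodule.span ℝ F :=
    vectorSpan_lt_span_of_forall_eq (f := dotProductEquiv ℝ (Fin d) u) hF.1 one_ne_zero
      fun _ hx => (hF.mem_iff.1 hx).2
  have hfinrank_lt := Submodule.finrank_lt_finrank_of_lt hlt
  have hfinrank_le := Submodule.finrank_le (Submodule.span ℝ F)
  have hfinrank_facet := hF.2.2.2
  apply Submodule.eq_top_of_finrank_eq
  rw [Module.finrank_fin_fun] at hfinrank_le ⊢
  omega

theorem span_extremePoints_eq_top (hPcomp : IsCompact P) (hPconv : Convex ℝ P)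
    (hF : IsFacetNormal P F u) : Submodule.span ℝ (F.extremePoints ℝ) = ⊤ := by
  rw [span_extremePoints (hF.isExposed.isCompact hPcomp) (hF.isExposed.convex hPconv),
    hF.span_eq_top]

theorem mem_extremePoints_dualPolytope (hF : IsFacetNormal P F u) :
    u ∈ (dualPolytope P).extremePoints ℝ := by
  refine ⟨hF.2.1, fun a ha b hb hu => eq_of_forall_dotp_eq hF.span_eq_top fun z hz => ?_⟩
  obtain ⟨hzP, huz⟩ := hF.mem_iff.1 hz
  have hface : IsExtreme ℝ (dualPolytope P) {y ∈ dualPolytope P | dotp z y = 1} := by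
    refine (isExposed_sep_dotp_eq fun y hy => ?_).isExtreme
    exact (dotp_comm z y).trans_le (hy z hzP)
  have haz : dotp z a = 1 := (hface.2 ha hb ⟨hF.2.1, (dotp_comm z u).trans huz⟩ hu).2
  exact (dotp_comm a z).trans (haz.trans huz.symm)

theorem dotp_nonpos_of_notMem (hdual : IsLatticePolytope (dualPolytope P))
    (hF : IsFacetNormal P F u) (hx : IsLP x) (hxP : x ∈ P) (hxF : x ∉ F) : dotp u x ≤ 0 := by
  have hlt : dotp u x < 1 := (hF.2.1 x hxP).lt_of_ne fun h => hxF (hF.mem_iff.2 ⟨hxP, h⟩)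
  have hu : IsLP u := hdual.isLP_of_mem_extremePoints hF.mem_extremePoints_dualPolytope
  obtain ⟨n, hn⟩ := hu.exists_int_dotp_eq hx
  rw [hn] at hlt ⊢
  norm_cast at hlt ⊢
  exact Int.lt_add_one_iff.1 hlt

theorem eq_add_smul_of_forall_dotp_eq_one (hPcomp : IsCompact P) (hPconv : Convex ℝ P)
    (hF : IsFacetNormal P F u) {uv : Fin d → ℝ} (huv1 : dotp uv v = 1)
    (huv0 : ∀ z ∈ F.extremePoints ℝ, z ≠ v → dotp uv z = 0)
    (hw : ∀ z ∈ F.extremePoints ℝ, z ≠ v → dotp w z = 1) :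
    w = u + (dotp w v - 1) • uv := by
  refine eq_of_forall_dotp_eq (hF.span_extremePoints_eq_top hPcomp hPconv) fun z hz => ?_
  have huz : dotp u z = 1 := (hF.mem_iff.1 hz.1).2
  rw [dotp_add_smul_left, huz]
  obtain rfl | hzv := eq_or_ne z v
  · rw [huv1]
    ring
  · rw [huv0 z hz hzv, hw z hz hzv]
    ring

end IsFacetNormal

theorem stmt7_general {d : ℕ} (P : Set (Fin d → ℝ)) (hP : IsReflexive P)
    (F F' : Set (Fin d → ℝ)) (u u' : Fin d → ℝ)
    (hF : IsFacetNormal P F u) (hF' : IsFacetNormal P F' u')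
    (v : Fin d → ℝ) (hv : v ∈ Set.extremePoints ℝ F)
    (hne : F' ≠ F) (hsub : Set.extremePoints ℝ F \ {v} ⊆ F')
    (uv : Fin d → ℝ) (huv1 : dotp uv v = 1)
    (huv0 : ∀ w ∈ Set.extremePoints ℝ F, w ≠ v → dotp uv w = 0) :
    dotp u' v ≤ 0 ∧
      ∀ x : Fin d → ℝ, dotp u' x = dotp u x + (dotp u' v - 1) * dotp uv x := by
  obtain ⟨hPlat, -, hdual⟩ := hP
  have hu' : u' = u + (dotp u' v - 1) • uv :=
    hF.eq_add_smul_of_forall_dotp_eq_one hPlat.isCompact hPlat.convex huv1 huv0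
      fun w hw hwv => (hF'.mem_iff.1 (hsub ⟨hw, hwv⟩)).2
  have hvF' : v ∉ F' := fun hvF' => hne <| by
    have huu' : u' = u := by simpa [(hF'.mem_iff.1 hvF').2] using hu'
    rw [hF'.2.2.1, hF.2.2.1, huu']
  have hvP : v ∈ P.extremePoints ℝ :=
    hF.isExposed.isExtreme.extremePoints_subset_extremePoints hv
  refine ⟨hF'.dotp_nonpos_of_notMem hdual (hPlat.isLP_of_mem_extremePoints hvP) hvP.1 hvF',
    fun x => ?_⟩
  calc dotp u' x = dotp (u + (dotp u' v - 1) • uv) x := congrArg (dotp · x) hu'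
    _ = dotp u x + (dotp u' v - 1) * dotp uv x := dotp_add_smul_left u uv x _

/-- for a facet `F` of a simplicial reflexive polytope, a vertex `v` of `F`
and the neighboring facet `F' = N(F,v)`: `⟨u_{F'}, v⟩ ≤ 0` and
`⟨u_{F'}, x⟩ = ⟨u_F, x⟩ + (⟨u_{F'}, v⟩ - 1)·⟨u_F^v, x⟩` for all `x`. -/
theorem stmt7 {d : ℕ} (P : Set (Fin d → ℝ)) (hP : IsReflexive P) (hs : IsSimplicial P)
    (F F' : Set (Fin d → ℝ)) (u u' : Fin d → ℝ)
    (hF : IsFacetNormal P F u) (hF' : IsFacetNormal P F' u')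
    (v : Fin d → ℝ) (hv : v ∈ Set.extremePoints ℝ F)
    (hne : F' ≠ F) (hsub : Set.extremePoints ℝ F \ {v} ⊆ F')
    (uv : Fin d → ℝ) (huv1 : dotp uv v = 1)
    (huv0 : ∀ w ∈ Set.extremePoints ℝ F, w ≠ v → dotp uv w = 0) :
    dotp u' v ≤ 0 ∧
      ∀ x : Fin d → ℝ, dotp u' x = dotp u x + (dotp u' v - 1) * dotp uv x :=
  stmt7_general P hP F F' u u' hF hF' v hv hne hsub uv huv1 huv0
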